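/- (Invariance of domain) Let V ⊆ ℝⁿ be open and f : V → ℝⁿ a continuous injective map. Then f is an open map: for every open U ⊆ V, the image f(U) is open in ℝⁿ. -/

import Mathlib

open Set Metric MeasureTheory Topology
open scoped NNReal

section NormedSpace

variable {E : Type*} [NormedAddCommGroup E] [NormedSpace ℝ E]

/-- The determinant of `1 + L` is a fixed affine combination of the determinants of `1 + tᵢ • L`,
for suitable arbitrarily small `tᵢ > 0`. -/
theorem exists_weights_det_one_add [FiniteDimensional ℝ E] {t₀ : ℝ} (ht₀ : 0 < t₀) :
    ∃ (s : Finset ℕ) (v w : ℕ → ℝ), (∀ i, 0 < v i ∧ v i ≤ t₀) ∧ ∑ i ∈ s, w i = 1 ∧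
      ∀ L : E →L[ℝ] E, (1 + L).det = ∑ i ∈ s, w i * (1 + v i • L).det := by
  set b := Module.finBasis ℝ E
  set d := Module.finrank ℝ E
  set s := Finset.range (d + 1)
  set v : ℕ → ℝ := fun i => t₀ / (i + 1)
  have hv : Function.Injective v := by
    intro i j hij
    have hi : (0 : ℝ) < i + 1 := by positivity
    have hj : (0 : ℝ) < j + 1 := by positivity
    simp only [v] at hij
    rw [div_eq_div_iff hi.ne' hj.ne'] at hij
    have := mul_left_cancel₀ ht₀.ne' hij
    exact_mod_cast (by linarith : (i : ℝ) = j)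
  refine ⟨s, v, fun i => (Lagrange.basis s v i).eval 1, fun i => ⟨by positivity, ?_⟩, ?_,
    fun L => ?_⟩
  · exact div_le_self ht₀.le (by simp)
  · rw [← Polynomial.eval_finsetSum, Lagrange.sum_basis hv.injOn ⟨0, by simp [s]⟩,
      Polynomial.eval_one]
  · set A := LinearMap.toMatrix b b (L : E →ₗ[ℝ] E)
    set p : Polynomial ℝ := ((Polynomial.X : Polynomial ℝ) • A.map Polynomial.C +
      (1 : Matrix (Fin d) (Fin d) ℝ).map Polynomial.C).det
    have hp : ∀ t : ℝ, p.eval t = (1 + t • L).det := by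
      intro t
      have h1 : p.eval t = (t • A + 1).det := by
        rw [← Polynomial.coe_evalRingHom, RingHom.map_det]
        congr 1
        ext i j
        by_cases hij : i = j <;> simp [hij] <;> ring
      rw [h1, ContinuousLinearMap.det, ← LinearMap.det_toMatrix b]
      congr 1
      rw [add_comm]
      simp [A, LinearMap.toMatrix_one]
    have hdeg : p.degree < s.card := by
      refine lt_of_le_of_lt Polynomial.degree_le_natDegree ?_
      have := Polynomial.natDegree_det_X_add_C_le A (1 : Matrix (Fin d) (Fin d) ℝ)
      simp only [Fintype.card_fin] at this
      simp only [s, Finset.card_range]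
      exact_mod_cast Nat.lt_succ_of_le this
    have h := Lagrange.eq_interpolate hv.injOn hdeg
    have h1 := congrArg (Polynomial.eval 1) h
    rw [hp, one_smul, Lagrange.interpolate_apply, Polynomial.eval_finsetSum] at h1
    rw [h1]
    refine Finset.sum_congr rfl fun i _ => ?_
    rw [Polynomial.eval_mul, Polynomial.eval_C, hp, mul_comm]

/-- The radial retraction onto the closed unit ball. -/
noncomputable def unitBallRetraction (x : E) : E := (max 1 ‖x‖)⁻¹ • x

theorem norm_unitBallRetraction_le (x : E) : ‖unitBallRetraction x‖ ≤ 1 := by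
  have h : 0 < max 1 ‖x‖ := by positivity
  rw [unitBallRetraction, norm_smul, norm_inv, Real.norm_of_nonneg h.le, inv_mul_le_iff₀ h]
  simp

theorem unitBallRetraction_of_norm_le {x : E} (hx : ‖x‖ ≤ 1) : unitBallRetraction x = x := by
  simp [unitBallRetraction, hx]

theorem norm_unitBallRetraction_of_one_le {x : E} (hx : 1 ≤ ‖x‖) :
    ‖unitBallRetraction x‖ = 1 := by
  have : ‖x‖ ≠ 0 := by positivity
  simp [unitBallRetraction, norm_smul, hx, this]

theorem lipschitzWith_unitBallRetraction :
    LipschitzWith 2 (unitBallRetraction : E → E) := by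
  refine LipschitzWith.of_dist_le_mul fun x y => ?_
  rw [dist_eq_norm, dist_eq_norm, unitBallRetraction, unitBallRetraction]
  set a := max 1 ‖x‖
  set b := max 1 ‖y‖
  have ha : 1 ≤ a := le_max_left _ _
  have hb : 1 ≤ b := le_max_left _ _
  have hyb : ‖y‖ ≤ b := le_max_right _ _
  have hab : |b - a| ≤ ‖x - y‖ := by
    rw [abs_sub_comm]
    have h := abs_max_sub_max_le_abs ‖x‖ ‖y‖ 1
    rw [max_comm ‖x‖, max_comm ‖y‖] at h
    exact h.trans (abs_norm_sub_norm_le x y)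
  have e : a⁻¹ • x - b⁻¹ • y = a⁻¹ • ((x - y) + ((b - a) * b⁻¹) • y) := by
    have : (b - a) * b⁻¹ = 1 - a * b⁻¹ := by field_simp
    rw [this, sub_smul, one_smul, smul_add, smul_sub, smul_sub, smul_smul, ← mul_assoc,
      inv_mul_cancel₀ (by positivity), one_mul]
    abel
  have h2 : ‖((b - a) * b⁻¹) • y‖ ≤ ‖x - y‖ := by
    rw [norm_smul, norm_mul, norm_inv, Real.norm_eq_abs,
      Real.norm_of_nonneg (by positivity : 0 ≤ b), mul_assoc]
    calc |b - a| * (b⁻¹ * ‖y‖) ≤ |b - a| * 1 := by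
          gcongr
          rw [inv_mul_le_iff₀ (by positivity)]
          simpa using hyb
      _ ≤ ‖x - y‖ := by simpa using hab
  rw [e, norm_smul, norm_inv, Real.norm_of_nonneg (by positivity : 0 ≤ a)]
  calc a⁻¹ * ‖x - y + ((b - a) * b⁻¹) • y‖ ≤ 1 * (‖x - y‖ + ‖x - y‖) := by
        gcongr
        · exact inv_le_one_of_one_le₀ ha
        · exact (norm_add_le _ _).trans (by gcongr)
    _ = ((2 : ℝ≥0) : ℝ) * ‖x - y‖ := by push_cast; ring

/-- The push-out of `y` away from `c`, to distance at least `ε`. -/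
noncomputable def pushOut (c : E) (ε : ℝ) (y : E) : E := c + max (ε / ‖y - c‖) 1 • (y - c)

theorem continuousOn_pushOut (c : E) (ε : ℝ) : ContinuousOn (pushOut c ε) {c}ᶜ := by
  have h : ContinuousOn (fun y : E => ε / ‖y - c‖) {c}ᶜ :=
    continuousOn_const.div (by fun_prop) fun y hy => norm_ne_zero_iff.2 (sub_ne_zero.2 hy)
  exact continuousOn_const.add ((h.sup continuousOn_const).smul (by fun_prop))

theorem pushOut_of_le {c y : E} {ε : ℝ} (hy : ε ≤ ‖y - c‖) : pushOut c ε y = y := by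
  have : max (ε / ‖y - c‖) 1 = 1 := max_eq_right (div_le_one_of_le₀ hy (norm_nonneg _))
  simp [pushOut, this]

theorem norm_pushOut_sub {c y : E} {ε : ℝ} (hyc : y ≠ c) (hε : 0 ≤ ε) (hy : ‖y - c‖ ≤ ε) :
    ‖pushOut c ε y - c‖ = ε := by
  have h0 : 0 < ‖y - c‖ := norm_pos_iff.2 (sub_ne_zero.2 hyc)
  have : max (ε / ‖y - c‖) 1 = ε / ‖y - c‖ := max_eq_left ((one_le_div h0).2 hy)
  rw [pushOut, this, add_sub_cancel_left, norm_smul, norm_div, norm_norm,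
    Real.norm_of_nonneg hε, div_mul_cancel₀ _ h0.ne']

/-- A small Lipschitz perturbation of the identity which vanishes on the unit sphere and maps the
closed unit ball to itself is a bijection of the closed unit ball. -/
theorem bijOn_closedBall_add_of_lipschitzOnWith [CompleteSpace E] {u : E → E} {K : ℝ≥0}
    (hK : K * 2 < 1) (hu : LipschitzOnWith K u (closedBall 0 1))
    (hu₀ : ∀ x, ‖x‖ = 1 → u x = 0) (hmaps : ∀ x, ‖x‖ ≤ 1 → ‖x + u x‖ ≤ 1) :
    BijOn (fun x => x + u x) (closedBall 0 1) (closedBall 0 1) := by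
  have hret : ∀ x : E, unitBallRetraction x ∈ closedBall (0 : E) 1 := fun x => by
    simpa using norm_unitBallRetraction_le x
  have hlip : LipschitzWith (K * 2) fun x => u (unitBallRetraction x) := by
    have := hu.comp (lipschitzWith_unitBallRetraction.lipschitzOnWith (s := univ))
      (fun x _ => hret x)
    rwa [lipschitzOnWith_univ] at this
  refine ⟨fun x hx => by simpa using hmaps x (by simpa using hx), fun x hx y hy hxy => ?_,
    fun y hy => ?_⟩
  · have hK1 : (K : ℝ) < 1 := by
      have : (K : ℝ) * 2 < 1 := by exact_mod_cast hK
      linarith [K.coe_nonneg]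
    have h := hu.norm_sub_le hx hy
    have h3 : x - y = -(u x - u y) := by
      have : x + u x = y + u y := hxy
      rw [neg_sub, sub_eq_sub_iff_add_eq_add, this, add_comm]
    have h4 : ‖x - y‖ ≤ K * ‖x - y‖ := by
      conv_lhs => rw [h3, norm_neg]
      exact h
    have h5 : ‖x - y‖ = 0 := by nlinarith [norm_nonneg (x - y)]
    exact sub_eq_zero.1 (norm_eq_zero.1 h5)
  · have hc : ContractingWith (K * 2) fun x => y - u (unitBallRetraction x) := by
      refine ⟨hK, LipschitzWith.of_dist_le_mul fun a b => ?_⟩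
      rw [dist_sub_left]
      exact hlip.dist_le_mul a b
    set x := hc.fixedPoint
    have hx : y - u (unitBallRetraction x) = x := hc.fixedPoint_isFixedPt
    have hx1 : ‖x‖ ≤ 1 := by
      by_contra! h
      rw [hu₀ _ (norm_unitBallRetraction_of_one_le h.le), sub_zero] at hx
      rw [← hx] at h
      exact absurd (by simpa using hy) h.not_ge
    rw [unitBallRetraction_of_norm_le hx1] at hx
    exact ⟨x, by simpa using hx1, (sub_eq_iff_eq_add.1 hx).symm⟩

end NormedSpace

section InnerProductSpace

variable {E : Type*} [NormedAddCommGroup E] [InnerProductSpace ℝ E] [FiniteDimensional ℝ E]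

/-- The derivative of a map into the unit sphere is singular. -/
theorem det_fderiv_eq_zero_of_norm_eq_one {r : E → E} {x : E}
    (hd : DifferentiableAt ℝ r x) (hr : ∀ y, ‖r y‖ = 1) : (fderiv ℝ r x).det = 0 := by
  by_contra hdet
  have h1 := hd.hasFDerivAt.norm_sq
  have h2 : HasFDerivAt (fun y => ‖r y‖ ^ 2) (0 : E →L[ℝ] ℝ) x := by
    simp only [hr]
    exact hasFDerivAt_const _ _
  have h3 := h1.unique h2
  obtain ⟨v, hv⟩ := ((fderiv ℝ r x : E →ₗ[ℝ] E).equivOfDetNeZero hdet).surjective (r x)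
  have hv' : fderiv ℝ r x v = r x := hv
  have h4 := congrArg (fun L => L v) h3
  simp [hv', hr] at h4

/-- There is no `C¹` retraction of the closed unit ball onto the unit sphere. -/
theorem not_exists_contDiff_retraction {r : E → E} (hr : ContDiff ℝ 1 r) (hr₁ : ∀ x, ‖r x‖ = 1)
    (hrs : ∀ x, ‖x‖ = 1 → r x = x) : False := by
  borelize E
  set μ : Measure E := Measure.addHaar
  set B : Set E := closedBall 0 1
  have hB : IsCompact B := isCompact_closedBall 0 1
  set g : E → E := fun x => r x - x
  have hg : ContDiff ℝ 1 g := hr.sub contDiff_id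
  have hg' : Continuous (fderiv ℝ g) := hg.continuous_fderiv one_ne_zero
  obtain ⟨C, hC⟩ := hg.contDiffOn.exists_lipschitzOnWith one_ne_zero (convex_closedBall (0 : E) 1) hB
  obtain ⟨M, hM⟩ := hB.exists_bound_of_continuousOn hg'.continuousOn
  obtain ⟨ε, hε, hdet⟩ : ∃ ε > 0, ∀ L : E →L[ℝ] E, ‖L‖ < ε → 0 < (1 + L).det := by
    have hc : ContinuousAt (fun L : E →L[ℝ] E => (1 + L).det) 0 :=
      (ContinuousLinearMap.continuous_det.comp (continuous_const.add continuous_id)).continuousAt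
    have h0 : 0 < (1 + (0 : E →L[ℝ] E)).det := by
      rw [add_zero]
      simp [ContinuousLinearMap.det]
    obtain ⟨ε, hε, h⟩ := Metric.eventually_nhds_iff.1 (hc.eventually (lt_mem_nhds h0))
    exact ⟨ε, hε, fun L hL => h (by simpa using hL)⟩
  obtain ⟨t₀, ht₀, ht1, htC, htM⟩ : ∃ t₀ : ℝ, 0 < t₀ ∧ t₀ ≤ 1 ∧ t₀ * C * 2 < 1 ∧ t₀ * |M| < ε := by
    refine ⟨min (1 / (1 + 2 * (C : ℝ))) (ε / (1 + |M|)) / 2, by positivity, ?_, ?_, ?_⟩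
    · have : 1 / (1 + 2 * (C : ℝ)) ≤ 1 := div_le_self zero_le_one (by simp)
      linarith [min_le_left (1 / (1 + 2 * (C : ℝ))) (ε / (1 + |M|))]
    · have h := min_le_left (1 / (1 + 2 * (C : ℝ))) (ε / (1 + |M|))
      have h0 : 0 < min (1 / (1 + 2 * (C : ℝ))) (ε / (1 + |M|)) := by positivity
      rw [le_div_iff₀ (by positivity)] at h
      nlinarith [C.coe_nonneg]
    · have h := min_le_right (1 / (1 + 2 * (C : ℝ))) (ε / (1 + |M|))
      have h0 : 0 < min (1 / (1 + 2 * (C : ℝ))) (ε / (1 + |M|)) := by positivity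
      rw [le_div_iff₀ (by positivity)] at h
      nlinarith [abs_nonneg M]
  have hcont : ∀ t : ℝ, Continuous fun x => (1 + t • fderiv ℝ g x).det := fun t =>
    ContinuousLinearMap.continuous_det.comp (continuous_const.add (hg'.const_smul t))
  have hvol : ∀ t : ℝ, 0 < t → t ≤ t₀ → ∫ x in B, (1 + t • fderiv ℝ g x).det ∂μ = μ.real B := by
    intro t ht htt
    have hbij : BijOn (fun x => x + t • g x) B B := by
      refine bijOn_closedBall_add_of_lipschitzOnWith (K := ⟨t, ht.le⟩ * C) (u := fun x => t • g x)
        ?_ ?_ (fun x hx => by simp [g, hrs x hx]) (fun x hx => ?_)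
      · rw [← NNReal.coe_lt_coe]
        push_cast
        refine lt_of_le_of_lt ?_ htC
        change t * C * 2 ≤ t₀ * C * 2
        gcongr
      · refine LipschitzOnWith.of_dist_le_mul fun x hx y hy => ?_
        rw [dist_smul₀, Real.norm_of_nonneg ht.le]
        change _ ≤ t * C * _
        rw [mul_assoc]
        gcongr
        exact hC.dist_le_mul x hx y hy
      · have : x + t • g x = (1 - t) • x + t • r x := by
          simp only [g]; module
        rw [this]
        calc _ ≤ ‖(1 - t) • x‖ + ‖t • r x‖ := norm_add_le _ _
          _ = (1 - t) * ‖x‖ + t := by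
            rw [norm_smul, norm_smul, hr₁, Real.norm_of_nonneg ht.le,
              Real.norm_of_nonneg (by linarith), mul_one]
          _ ≤ (1 - t) * 1 + t := by
            gcongr
            linarith
          _ = 1 := by ring
    have hder : ∀ x ∈ B, HasFDerivWithinAt (fun x => x + t • g x) (1 + t • fderiv ℝ g x) B x := by
      intro x _
      exact ((hasFDerivAt_id x).add
        ((hg.differentiable one_ne_zero x).hasFDerivAt.const_smul t)).hasFDerivWithinAt
    have h := integral_image_eq_integral_abs_det_fderiv_smul μ hB.measurableSet hder hbij.injOn
      (fun _ => (1 : ℝ))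
    rw [hbij.image_eq] at h
    simp only [smul_eq_mul, mul_one, integral_const, MeasurableSet.univ, measureReal_restrict_apply,
      univ_inter] at h
    rw [h]
    refine setIntegral_congr_fun hB.measurableSet fun x hx => ?_
    refine (abs_of_pos (hdet _ ?_)).symm
    rw [norm_smul, Real.norm_of_nonneg ht.le]
    refine lt_of_le_of_lt ?_ htM
    gcongr
    exact (hM x hx).trans (le_abs_self M)
  obtain ⟨s, v, w, hv, hw, hsum⟩ := exists_weights_det_one_add (E := E) ht₀
  have hzero : ∀ x, (1 + fderiv ℝ g x).det = 0 := by
    intro x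
    have : fderiv ℝ g x = fderiv ℝ r x - 1 := by
      have h := ((hr.differentiable one_ne_zero x).hasFDerivAt.sub (hasFDerivAt_id x)).fderiv
      exact h
    rw [this, add_sub_cancel]
    exact det_fderiv_eq_zero_of_norm_eq_one (hr.differentiable one_ne_zero x) hr₁
  have hint : ∫ x in B, (1 + fderiv ℝ g x).det ∂μ = μ.real B := by
    rw [funext fun x => hsum (fderiv ℝ g x)]
    rw [integral_finsetSum _ fun i _ =>
      ((hcont (v i)).continuousOn.integrableOn_compact hB).const_mul (w i)]
    simp only [integral_const_mul]
    rw [Finset.sum_congr rfl fun i _ => by rw [hvol (v i) (hv i).1 (hv i).2], ← Finset.sum_mul, hw,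
      one_mul]
  simp only [hzero, integral_zero] at hint
  have hpos : 0 < μ.real B :=
    ENNReal.toReal_pos (measure_closedBall_pos μ 0 one_pos).ne' hB.measure_lt_top.ne
  exact hpos.ne hint

/-- Stability of the zero of the identity map under perturbations on the closed unit ball. -/
theorem exists_eq_zero_of_norm_sub_le {H : E → E} (hH : Continuous H)
    (hid : ∀ x, ‖x‖ ≤ 1 → ‖H x - x‖ ≤ 3 / 10) : ∃ x, ‖x‖ ≤ 1 ∧ H x = 0 := by
  by_contra! hne
  have hB : IsCompact (closedBall (0 : E) 1) := isCompact_closedBall 0 1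
  obtain ⟨δ, hδ, hδH⟩ : ∃ δ > 0, ∀ x, ‖x‖ ≤ 1 → δ ≤ ‖H x‖ := by
    obtain ⟨x₀, hx₀, hmin⟩ := hB.exists_isMinOn ⟨0, by simp⟩ hH.norm.continuousOn
    exact ⟨‖H x₀‖, norm_pos_iff.2 (hne x₀ (by simpa using hx₀)),
      fun x hx => hmin (by simpa using hx)⟩
  obtain ⟨P, hP, hPH, -⟩ := hH.exists_contDiff_approx 1 (continuous_const (y := min δ (1 / 10)))
    (fun _ => by positivity)
  simp only [dist_eq_norm, lt_min_iff] at hPH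
  let φ : ContDiffBump (0 : E) := ⟨1 / 2, 9 / 10, by norm_num, by norm_num⟩
  set K : E → E := fun x => x + φ x • (P x - x)
  have hK : ContDiff ℝ 1 K := contDiff_id.add (φ.contDiff.smul (hP.sub contDiff_id))
  have hKid : ∀ x, 9 / 10 ≤ ‖x‖ → K x = x := fun x hx => by
    simp [K, φ.zero_of_le_dist (x := x) (by simpa [φ] using hx)]
  have hK0 : ∀ x, K x ≠ 0 := by
    intro x
    rcases le_or_gt (9 / 10) ‖x‖ with h | h
    · rw [hKid x h, ← norm_pos_iff]
      linarith
    rcases le_or_gt ‖x‖ (1 / 2) with h2 | h2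
    · have : K x = P x := by
        simp [K, φ.one_of_mem_closedBall (x := x) (by simpa [φ] using h2)]
      rw [this]
      intro h0
      have := (hPH x).1
      rw [h0, zero_sub, norm_neg] at this
      linarith [hδH x (by linarith)]
    · intro h0
      have h3 : ‖x‖ = ‖φ x • (P x - x)‖ := by
        rw [← norm_neg (φ x • (P x - x)), ← eq_neg_of_add_eq_zero_left h0]
      rw [norm_smul, Real.norm_of_nonneg φ.nonneg] at h3
      have h4 : ‖P x - x‖ ≤ 1 / 10 + 3 / 10 := by
        rw [← sub_add_sub_cancel (P x) (H x) x]
        exact (norm_add_le _ _).trans (add_le_add (hPH x).2.le (hid x (by linarith)))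
      have h5 : φ x * ‖P x - x‖ ≤ 1 * ‖P x - x‖ := by
        gcongr
        exact φ.le_one
      linarith
  refine not_exists_contDiff_retraction (r := fun x => ‖K x‖⁻¹ • K x)
    (((hK.norm ℝ hK0).inv fun x => norm_ne_zero_iff.2 (hK0 x)).smul hK) (fun x => ?_)
    (fun x hx => ?_)
  · simp [norm_smul, hK0 x]
  · simp [hKid x (by rw [hx]; norm_num), hx]

/-- A `C¹` function can be moved off the origin on a sphere by an arbitrarily small translation. -/
theorem exists_norm_lt_forall_sphere_ne {P : E → E} (hP : ContDiff ℝ 1 P) (c : E) {ε η : ℝ}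
    (hε : ε ≠ 0) (hη : 0 < η) : ∃ v : E, ‖v‖ < η ∧ ∀ y ∈ sphere c ε, P y ≠ v := by
  borelize E
  have hnull : (Measure.addHaar : Measure E) (P '' sphere c ε) = 0 :=
    addHaar_image_eq_zero_of_differentiableOn_of_addHaar_eq_zero _
      (hP.differentiable one_ne_zero).differentiableOn (Measure.addHaar_sphere_of_ne_zero _ c hε)
  by_contra! h
  refine (measure_ball_pos (Measure.addHaar : Measure E) 0 hη).ne' (measure_mono_null ?_ hnull)
  intro v hv
  obtain ⟨y, hy, rfl⟩ := h v (by simpa using hv)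
  exact ⟨y, hy, rfl⟩

/-- An injective continuous map on a compact set has a globally defined continuous left inverse. -/
theorem exists_continuous_leftInverse {f : E → E} {s : Set E} (hs : IsCompact s)
    (hf : ContinuousOn f s) (hinj : InjOn f s) :
    ∃ G : E → E, Continuous G ∧ ∀ x ∈ s, G (f x) = x := by
  have : CompactSpace s := isCompact_iff_compactSpace.1 hs
  have : TietzeExtension E := .of_tvs ℝ
  have he : IsClosedEmbedding (s.domRestrict f) :=
    (continuousOn_iff_continuous_domRestrict.1 hf).isClosedEmbedding (injOn_iff_injective.1 hinj)
  obtain ⟨G, hG⟩ :=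
    ContinuousMap.exists_extension' he (⟨Subtype.val, continuous_subtype_val⟩ : C(s, E))
  exact ⟨G, G.continuous, fun x hx => congrFun hG ⟨x, hx⟩⟩

theorem zero_image_mem_interior_image_closedBall {f : E → E}
    (hf : ContinuousOn f (closedBall 0 1)) (hinj : InjOn f (closedBall 0 1)) :
    f 0 ∈ interior (f '' closedBall 0 1) := by
  set B : Set E := closedBall 0 1
  have hB : IsCompact B := isCompact_closedBall 0 1
  have h0B : (0 : E) ∈ B := by simp [B]
  obtain ⟨G, hG, hGf⟩ := exists_continuous_leftInverse hB hf hinj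
  by_contra hint
  obtain ⟨ε, hε, hGε⟩ : ∃ ε > 0, ∀ y, ‖y - f 0‖ ≤ 2 * ε → ‖G y‖ ≤ 1 / 10 := by
    obtain ⟨ε, hε, h⟩ := Metric.continuousAt_iff.1 (hG.continuousAt (x := f 0)) (1 / 10) (by norm_num)
    refine ⟨ε / 3, by positivity, fun y hy => ?_⟩
    have := h (x := y) (by rw [dist_eq_norm]; linarith)
    rw [hGf 0 h0B, dist_zero_right] at this
    exact this.le
  obtain ⟨c, hcε, hcB⟩ : ∃ c, ‖f 0 - c‖ < ε ∧ c ∉ f '' B := by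
    by_contra! h
    refine hint (mem_interior_iff_mem_nhds.2 (Filter.mem_of_superset (ball_mem_nhds _ hε) ?_))
    exact fun c hc => h c (by rwa [mem_ball, dist_comm, dist_eq_norm] at hc)
  have hfc : ∀ x ∈ B, f x ≠ c := fun x hx h => hcB ⟨x, hx, h⟩
  obtain ⟨δ, hδ, hδG⟩ : ∃ δ > 0, ∀ y ∈ f '' B, ε ≤ ‖y - c‖ → δ ≤ ‖G y‖ := by
    set S : Set E := f '' B ∩ {y | ε ≤ ‖y - c‖}
    have hS : IsCompact S := (hB.image_of_continuousOn hf).inter_right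
      (isClosed_le continuous_const (by fun_prop))
    rcases S.eq_empty_or_nonempty with hS0 | hS0
    · exact ⟨1, one_pos, fun y hy hyc => absurd (show y ∈ S from ⟨hy, hyc⟩) (by simp [hS0])⟩
    obtain ⟨y₀, ⟨⟨x, hx, rfl⟩, hy₀⟩, hmin⟩ := hS.exists_isMinOn hS0 hG.norm.continuousOn
    refine ⟨‖G (f x)‖, norm_pos_iff.2 fun h => ?_, fun y hy hyc => hmin ⟨hy, hyc⟩⟩
    rw [hGf x hx] at h
    rw [h] at hy₀
    exact absurd hcε hy₀.not_gt
  set η : ℝ := min δ (1 / 10)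
  have hη : 0 < η := by positivity
  obtain ⟨P, hP, hPG, -⟩ := hG.exists_contDiff_approx 1 (continuous_const (y := η / 2))
    (fun _ => by positivity)
  obtain ⟨v, hv, hvP⟩ := exists_norm_lt_forall_sphere_ne hP c hε.ne' (half_pos hη)
  have hPvG : ∀ y, ‖P y - v - G y‖ < η := fun y => by
    have : P y - v - G y = (P y - G y) - v := by abel
    rw [this]
    have h := hPG y
    rw [dist_eq_norm] at h
    linarith [norm_sub_le (P y - G y) v]
  have hret : ∀ x : E, unitBallRetraction x ∈ B := fun x => by
    simpa [B] using norm_unitBallRetraction_le x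
  have hcont : Continuous fun x => P (pushOut c ε (f (unitBallRetraction x))) - v := by
    have h1 : Continuous fun x => f (unitBallRetraction x) :=
      hf.comp_continuous lipschitzWith_unitBallRetraction.continuous hret
    exact (hP.continuous.comp ((continuousOn_pushOut c ε).comp_continuous h1
      fun x => hfc _ (hret x))).sub continuous_const
  obtain ⟨x, hx1, hx0⟩ := exists_eq_zero_of_norm_sub_le hcont fun x hx => by
    have hxB : x ∈ B := by simpa [B] using hx
    rw [unitBallRetraction_of_norm_le hx]
    have hη10 : η ≤ 1 / 10 := min_le_right _ _
    rcases le_total ε ‖f x - c‖ with h | h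
    · rw [pushOut_of_le h]
      have := hPvG (f x)
      rw [hGf x hxB] at this
      linarith
    · have h1 := norm_pushOut_sub (hfc x hxB) hε.le h
      set y := pushOut c ε (f x)
      have hnear : ∀ z, ‖z - c‖ ≤ ε → ‖G z‖ ≤ 1 / 10 := fun z hz => hGε z <| by
        rw [← sub_add_sub_cancel z c]
        have := norm_add_le (z - c) (c - f 0)
        rw [norm_sub_rev c] at this
        linarith
      have h2 := hnear y h1.le
      have h3 := hnear (f x) h
      rw [hGf x hxB] at h3
      have : P y - v - x = (P y - v - G y) + (G y - x) := by abel
      rw [this]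
      linarith [norm_add_le (P y - v - G y) (G y - x), norm_sub_le (G y) x, hPvG y]
  have hxB : x ∈ B := by simpa [B] using hx1
  rw [unitBallRetraction_of_norm_le hx1] at hx0
  rcases le_total ε ‖f x - c‖ with h | h
  · rw [pushOut_of_le h] at hx0
    have h1 := hPvG (f x)
    rw [hx0, zero_sub, norm_neg] at h1
    linarith [hδG _ ⟨x, hxB, rfl⟩ h, min_le_left δ (1 / 10)]
  · exact hvP _ (by simpa [dist_eq_norm] using norm_pushOut_sub (hfc x hxB) hε.le h)
      (sub_eq_zero.1 hx0)

/-- **Invariance of domain** in a finite-dimensional inner product space. -/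
theorem isOpen_image_of_continuousOn_of_injOn {U : Set E} {f : E → E} (hU : IsOpen U)
    (hf : ContinuousOn f U) (hinj : InjOn f U) : IsOpen (f '' U) := by
  rw [isOpen_iff_mem_nhds]
  rintro _ ⟨a, ha, rfl⟩
  obtain ⟨ρ, hρ, hρU⟩ := nhds_basis_closedBall.mem_iff.1 (hU.mem_nhds ha)
  set φ : E → E := fun x => a + ρ • x
  have hφ : MapsTo φ (closedBall 0 1) U := fun x hx => hρU <| by
    have : ‖x‖ ≤ 1 := by simpa using hx
    simpa [φ, norm_smul, abs_of_pos hρ] using mul_le_mul_of_nonneg_left this hρ.le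
  have hφinj : Function.Injective φ := fun x y hxy =>
    smul_right_injective E hρ.ne' (add_left_cancel hxy)
  have h := zero_image_mem_interior_image_closedBall (f := f ∘ φ)
    (hf.comp (by fun_prop) hφ) (hinj.comp hφinj.injOn hφ)
  have h0 : (f ∘ φ) 0 = f a := by simp [φ]
  rw [h0, mem_interior_iff_mem_nhds, image_comp] at h
  exact Filter.mem_of_superset h (image_mono hφ.image_subset)

end InnerProductSpace

/-- Invariance of domain: a continuous injective map from an open subset `V` of ℝⁿ
to ℝⁿ is an open map. -/
theorem stmt_7 (n : ℕ) (V : Set (Fin n → ℝ)) (hV : IsOpen V)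
    (f : (Fin n → ℝ) → (Fin n → ℝ))
    (hf : ContinuousOn f V) (hinj : Set.InjOn f V) :
    ∀ U ⊆ V, IsOpen U → IsOpen (f '' U) := by
  intro U hUV hU
  let e : EuclideanSpace ℝ (Fin n) ≃ₜ (Fin n → ℝ) := PiLp.homeomorph 2 fun _ => ℝ
  have hmaps : MapsTo e (e ⁻¹' U) U := fun _ h => h
  have h := isOpen_image_of_continuousOn_of_injOn (f := e.symm ∘ f ∘ e) (hU.preimage e.continuous)
    (e.symm.continuous.comp_continuousOn
      ((hf.mono hUV).comp e.continuous.continuousOn hmaps))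
    (e.symm.injective.comp_injOn ((hinj.mono hUV).comp e.injective.injOn hmaps))
  rw [image_comp, image_comp, e.image_preimage, e.symm.isOpen_image] at h
  exact h
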